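/- For all integers Δ ≥ 4 and t ≥ 3, there exists a tree G of order n = t(Δ−2)Δ + 2t with maximum degree Δ such that γ^ID(G) = t((Δ−2)(Δ−1) + 1); moreover, this value satisfies γ^ID(G) > ((Δ−1)/Δ)·n − n/Δ². -/

import Mathlib

open SimpleGraph

/-- The closed neighborhood `N[v]` of a vertex `v` in `G`. -/
def closedNbhd {V : Type*} (G : SimpleGraph V) (v : V) : Set V :=
  insert v (G.neighborSet v)

/-- `C` is an identifying code of `G`: it dominates every vertex and the
closed neighborhoods of distinct vertices intersect `C` differently. -/
def IsIDCode {V : Type*} (G : SimpleGraph V) (C : Set V) : Prop :=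
  (∀ v, (closedNbhd G v ∩ C).Nonempty) ∧
  ∀ u w : V, u ≠ w → closedNbhd G u ∩ C ≠ closedNbhd G w ∩ C

/-- The identification number `γ^ID(G)`: the minimum size of an identifying code. -/
noncomputable def idNum {V : Type*} [Fintype V] (G : SimpleGraph V) : ℕ :=
  sInf {k | ∃ C : Set V, C.ncard = k ∧ IsIDCode G C}

/-- `G` is identifiable (closed-twin-free). -/
def Identifiable {V : Type*} (G : SimpleGraph V) : Prop :=
  ∀ u w : V, u ≠ w → closedNbhd G u ≠ closedNbhd G w

/-- The maximum degree of a finite graph `G`. -/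
noncomputable def maxDeg {V : Type*} [Fintype V] (G : SimpleGraph V) : ℕ :=
  Finset.univ.sup fun v => (G.neighborSet v).ncard

/-- `S` is a dominating set of `G`. -/
def IsDomSet {V : Type*} (G : SimpleGraph V) (S : Set V) : Prop :=
  ∀ v, (closedNbhd G v ∩ S).Nonempty

/-- The domination number `γ(G)`. -/
noncomputable def domNum {V : Type*} [Fintype V] (G : SimpleGraph V) : ℕ :=
  sInf {k | ∃ S : Set V, S.ncard = k ∧ IsDomSet G S}

/-- The star `K_{1,k}`: vertex `0` is adjacent to each of the `k` other vertices. -/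
def starGraph (k : ℕ) : SimpleGraph (Fin (k + 1)) :=
  SimpleGraph.fromRel fun a _ => a = 0

/-- The graph obtained from `G'` by appending a star with `k` extra leaves onto the
vertex `v`: we add a new universal vertex `u = Sum.inr none` adjacent to `v`,
and `k` new leaves `Sum.inr (some i)` adjacent to `u` (so the star has `k + 1`
leaves in total, one of which is identified with `v`, i.e. a `(k+1)`-star is
appended by one of its leaves onto `v`). -/
def appendStar {V : Type*} (G' : SimpleGraph V) (v : V) (k : ℕ) :
    SimpleGraph (V ⊕ Option (Fin k)) :=
  SimpleGraph.fromRel fun a b =>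
    (∃ x y, a = Sum.inl x ∧ b = Sum.inl y ∧ G'.Adj x y) ∨
    (a = Sum.inl v ∧ b = Sum.inr none) ∨
    (∃ i, a = Sum.inr none ∧ b = Sum.inr (some i))

/-!
`T_{t,Δ}` is the rooted product of the path on `t` vertices with the tree `T_{1,Δ}`, so its
identification number can be computed inside one copy of `T_{1,Δ}`.

Lower bound: if the closed neighborhoods of the vertices in a set `s` pairwise meet in at most one
prescribed vertex each, then choosing a codeword near each `x ∈ s`, the prescribed one only if it is
the only one, is injective because codes separate. Hence every identifying code has at least `|s|`
elements. In `T_{1,Δ}` the leaves of the stars and the subdivision vertex form such a set.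

Upper bound: an identifying code of `T_{1,Δ}` that avoids the root can be repeated in every copy,
since codewords are then seen only from within their own copy. Replacing one leaf of the star at the
subdivided edge by the center of that star turns the set above into such a code.
-/

section IdentifyingCode

variable {V W : Type*} {G : SimpleGraph V} {H : SimpleGraph W} {C s : Set V} {c : V → V}

theorem mem_closedNbhd {u v : V} : u ∈ closedNbhd G v ↔ u = v ∨ G.Adj v u := Iff.rfl

theorem mem_closedNbhd_comm {u v : V} : u ∈ closedNbhd G v ↔ v ∈ closedNbhd G u :=
  or_congr eq_comm (G.adj_comm v u)

theorem isIDCode_iff : IsIDCode G C ↔ (∀ v, ∃ z ∈ C, v ∈ closedNbhd G z) ∧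
    ∀ u w, (∀ z ∈ C, u ∈ closedNbhd G z ↔ w ∈ closedNbhd G z) → u = w := by
  refine and_congr ?_ (forall₂_congr fun u w => not_imp_not.trans (imp_congr_left ?_))
  · simp only [Set.Nonempty, Set.mem_inter_iff, mem_closedNbhd_comm (G := G), and_comm]
  · simp only [Set.ext_iff, Set.mem_inter_iff, and_congr_left_iff, mem_closedNbhd_comm (G := G)]

theorem IsIDCode.injective (hC : IsIDCode G C) :
    Function.Injective fun v => closedNbhd G v ∩ C :=
  fun u w h => by_contra fun hne => hC.2 u w hne h

/-- A near-packing: the closed neighborhoods of distinct vertices `x, y ∈ s` meet at most in `c x`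
(and hence, by symmetry, only if `c x = c y`). For a packing they would be disjoint. -/
def IsNearPacking (G : SimpleGraph V) (c : V → V) (s : Set V) : Prop :=
  s.Pairwise fun x y => closedNbhd G x ∩ closedNbhd G y ⊆ {c x}

theorem IsNearPacking.ncard_le [Finite V] (hs : IsNearPacking G c s) (hC : IsIDCode G C) :
    s.ncard ≤ C.ncard := by
  have exists_codeword : ∀ x, ∃ z ∈ closedNbhd G x ∩ C,
      z = c x → closedNbhd G x ∩ C = {c x} := by
    intro x
    by_cases h : ∃ z ∈ closedNbhd G x ∩ C, z ≠ c x
    · obtain ⟨z, hz, hzc⟩ := h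
      exact ⟨z, hz, fun h => absurd h hzc⟩
    · push Not at h
      obtain ⟨z, hz⟩ := hC.1 x
      exact ⟨z, hz, fun _ => Set.eq_singleton_iff_unique_mem.2 ⟨h z hz ▸ hz, h⟩⟩
  choose f hf hf_contact using exists_codeword
  refine Set.ncard_le_ncard_of_injOn f (fun x _ => (hf x).2) fun x hx y hy hxy => ?_
  by_contra hne
  have hfx : f x = c x := hs hx hy hne ⟨(hf x).1, hxy ▸ (hf y).1⟩
  have hfy : f y = c y := hs hy hx (Ne.symm hne) ⟨(hf y).1, hxy ▸ (hf x).1⟩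
  refine hne (hC.injective ?_)
  calc closedNbhd G x ∩ C = {f x} := by rw [hf_contact x hfx, hfx]
    _ = {f y} := by rw [hxy]
    _ = closedNbhd G y ∩ C := by rw [hf_contact y hfy, hfy]

theorem IsNearPacking.idNum_eq [Fintype V] (hs : IsNearPacking G c s) (hC : IsIDCode G C)
    (h : C.ncard = s.ncard) : idNum G = s.ncard := by
  refine le_antisymm (Nat.sInf_le ⟨C, h, hC⟩) (le_csInf ⟨_, C, h, hC⟩ ?_)
  rintro _ ⟨D, rfl, hD⟩
  exact hs.ncard_le hD

theorem closedNbhd_eq_preimage (e : G ≃g H) (v : V) :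
    closedNbhd G v = e ⁻¹' closedNbhd H (e v) := by
  ext w
  simp [mem_closedNbhd, e.map_adj_iff]

theorem isIDCode_preimage_iff (e : G ≃g H) {D : Set W} : IsIDCode G (e ⁻¹' D) ↔ IsIDCode H D := by
  have inj : Function.Injective (Set.preimage e) := Set.preimage_injective.2 e.surjective
  simp only [IsIDCode, closedNbhd_eq_preimage e, ← Set.preimage_inter, inj.ne_iff,
    e.surjective.nonempty_preimage, e.surjective.forall, e.injective.ne_iff]

theorem idNum_congr [Fintype V] [Fintype W] (e : G ≃g H) : idNum G = idNum H := by
  refine congrArg sInf (Set.ext fun k => (Set.preimage_surjective.2 e.injective).exists.trans ?_)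
  refine exists_congr fun D => and_congr (Eq.congr_left ?_) (isIDCode_preimage_iff e)
  exact Set.ncard_preimage_of_injective_subset_range e.injective
    (e.surjective.range_eq ▸ Set.subset_univ D)

end IdentifyingCode

section MaxDeg

variable {V W : Type*} [Fintype V] [Fintype W] {G : SimpleGraph V} {H : SimpleGraph W}

theorem maxDeg_le_iff {d : ℕ} : maxDeg G ≤ d ↔ ∀ v, (G.neighborSet v).ncard ≤ d := by
  simp [maxDeg]

theorem ncard_neighborSet_le_maxDeg (v : V) : (G.neighborSet v).ncard ≤ maxDeg G :=
  maxDeg_le_iff.1 le_rfl v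

theorem exists_ncard_neighborSet_eq_maxDeg [Nonempty V] :
    ∃ v, (G.neighborSet v).ncard = maxDeg G := by
  obtain ⟨v, -, hv⟩ := Finset.exists_mem_eq_sup Finset.univ Finset.univ_nonempty
    fun v => (G.neighborSet v).ncard
  exact ⟨v, hv.symm⟩

theorem maxDeg_congr (e : G ≃g H) : maxDeg G = maxDeg H := by
  have ncard_eq (v : V) : (G.neighborSet v).ncard = (H.neighborSet (e v)).ncard :=
    Nat.card_congr (e.mapNeighborSet v)
  refine eq_of_forall_ge_iff fun d => ?_
  simp only [maxDeg_le_iff, ncard_eq, e.surjective.forall]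

theorem maxDeg_pathGraph_le (n : ℕ) : maxDeg (pathGraph n) ≤ 2 := by
  refine maxDeg_le_iff.2 fun i => ?_
  calc ((pathGraph n).neighborSet i).ncard
      = (Fin.val '' (pathGraph n).neighborSet i).ncard :=
        (Set.ncard_image_of_injective _ Fin.val_injective).symm
    _ ≤ ({i.val - 1, i.val + 1} : Set ℕ).ncard := by
        refine Set.ncard_le_ncard ?_
        rintro _ ⟨j, hj, rfl⟩
        rw [mem_neighborSet, pathGraph_adj] at hj
        simp only [Set.mem_insert_iff, Set.mem_singleton_iff]
        omega
    _ ≤ 2 := (Set.ncard_insert_le _ _).trans (by rw [Set.ncard_singleton])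

end MaxDeg

section Tree

variable {V : Type*} [Finite V] {G : SimpleGraph V}

theorem isTree_of_ncard_edgeSet_lt (hG : G.Connected) (h : G.edgeSet.ncard < Nat.card V) :
    G.IsTree :=
  isTree_iff_connected_and_card.2 ⟨hG, le_antisymm h hG.card_vert_le_card_edgeSet_add_one⟩

theorem isTree_fromRel_parent {parent : V → V} {r : V} (hr : parent r = r) (depth : V → ℕ)
    (hdepth : ∀ v, v ≠ r → depth (parent v) < depth v) :
    (SimpleGraph.fromRel fun v w => parent v = w).IsTree := by
  set G := SimpleGraph.fromRel fun v w => parent v = w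
  have reachable_root (v : V) : G.Reachable v r := by
    induction hv : depth v using Nat.strong_induction_on generalizing v with
    | _ n ih =>
      by_cases hvr : v = r
      · rw [hvr]
      · have hlt := hdepth v hvr
        have hne : v ≠ parent v := fun h => hlt.ne (congrArg depth h.symm)
        have hadj : G.Adj v (parent v) := (fromRel_adj _ _ _).2 ⟨hne, Or.inl rfl⟩
        exact hadj.reachable.trans (ih _ (hv ▸ hlt) _ rfl)
  have connected : G.Connected :=
    connected_iff_exists_forall_reachable G |>.2 ⟨r, fun v => (reachable_root v).symm⟩
  have edgeSet_subset : G.edgeSet ⊆ (fun v => s(v, parent v)) '' {r}ᶜ := by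
    rintro ⟨v, w⟩ ⟨hne : v ≠ w, (h : parent v = w) | (h : parent w = v)⟩ <;> subst h
    · exact ⟨v, fun h : v = r => hne (by rw [h, hr]), rfl⟩
    · exact ⟨w, fun h : w = r => hne (by rw [h, hr]), Sym2.eq_swap⟩
  refine isTree_of_ncard_edgeSet_lt connected ?_
  calc G.edgeSet.ncard ≤ ({r}ᶜ : Set V).ncard :=
        (Set.ncard_le_ncard edgeSet_subset).trans Set.ncard_image_le
    _ < Nat.card V := by
        rw [← Set.ncard_add_ncard_compl {r}, Set.ncard_singleton]
        omega

theorem isTree_pathGraph (n : ℕ) : (pathGraph (n + 1)).IsTree := by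
  have pathGraph_eq : pathGraph (n + 1) =
      SimpleGraph.fromRel fun i j => (⟨i.val - 1, by omega⟩ : Fin (n + 1)) = j := by
    ext i j
    simp only [pathGraph_adj, fromRel_adj, ne_eq, Fin.ext_iff]
    omega
  rw [pathGraph_eq]
  refine isTree_fromRel_parent (r := 0) rfl Fin.val fun i hi => ?_
  have : i.val ≠ 0 := Fin.val_ne_zero_iff.2 hi
  simp only
  omega

end Tree

/-- The rooted product of `H` and `K`: a copy of `K` is attached by its root `r` to each vertex of
`H`. The pair `(w, u)` is the vertex `u` of the copy at `w`, and `(w, r)` is `w` itself. -/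
def rootedProduct {W U : Type*} (H : SimpleGraph W) (K : SimpleGraph U) (r : U) :
    SimpleGraph (W × U) where
  Adj x y := (x.1 = y.1 ∧ K.Adj x.2 y.2) ∨ (x.2 = r ∧ y.2 = r ∧ H.Adj x.1 y.1)
  symm := ⟨fun _ _ => Or.imp (And.imp Eq.symm Adj.symm) fun h => ⟨h.2.1, h.1, h.2.2.symm⟩⟩
  loopless := ⟨fun _ h => h.elim (fun h => h.2.ne rfl) fun h => h.2.2.ne rfl⟩

section RootedProduct

variable {W U : Type*} {H : SimpleGraph W} {K : SimpleGraph U} {r : U}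

theorem neighborSet_rootedProduct_of_ne (w : W) {u : U} (hu : u ≠ r) :
    (rootedProduct H K r).neighborSet (w, u) = {w} ×ˢ K.neighborSet u := by
  ext ⟨w', u'⟩
  simp [rootedProduct, hu, eq_comm (a := w)]

theorem neighborSet_rootedProduct_root (w : W) :
    (rootedProduct H K r).neighborSet (w, r) =
      {w} ×ˢ K.neighborSet r ∪ H.neighborSet w ×ˢ {r} := by
  ext ⟨w', u'⟩
  simp [rootedProduct, eq_comm (a := w), and_comm]

theorem closedNbhd_rootedProduct_of_ne (w : W) {u : U} (hu : u ≠ r) :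
    closedNbhd (rootedProduct H K r) (w, u) = {w} ×ˢ closedNbhd K u := by
  rw [closedNbhd, neighborSet_rootedProduct_of_ne w hu, closedNbhd, Set.insert_eq, Set.insert_eq,
    Set.prod_union, Set.singleton_prod_singleton]

theorem closedNbhd_rootedProduct_inter {C : Set U} (hr : r ∉ C) (x : W × U) :
    closedNbhd (rootedProduct H K r) x ∩ Set.univ ×ˢ C = {x.1} ×ˢ (closedNbhd K x.2 ∩ C) := by
  obtain ⟨w, u⟩ := x
  ext ⟨w', u'⟩
  have (h : u' ∈ C) : u' ≠ r := fun h' => hr (h' ▸ h)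
  simp only [Set.mem_inter_iff, mem_closedNbhd, rootedProduct, Set.mem_prod, Set.mem_univ,
    Set.mem_singleton_iff, Prod.mk.injEq]
  grind

protected theorem IsNearPacking.rootedProduct {c : U → U} {s : Set U} (hs : IsNearPacking K c s)
    (hr : r ∉ s) :
    IsNearPacking (rootedProduct H K r) (Prod.map id c) (Set.univ ×ˢ s) := by
  rintro ⟨w, u⟩ ⟨-, hu⟩ ⟨w', u'⟩ ⟨-, hu'⟩ hne
  rw [closedNbhd_rootedProduct_of_ne w (ne_of_mem_of_not_mem hu hr),
    closedNbhd_rootedProduct_of_ne w' (ne_of_mem_of_not_mem hu' hr), Set.prod_inter_prod]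
  rintro ⟨a, b⟩ ⟨⟨rfl, rfl⟩, hb⟩
  exact Prod.ext rfl (hs hu hu' (fun h => hne (Prod.ext rfl h)) hb)

protected theorem IsIDCode.rootedProduct {C : Set U} (hC : IsIDCode K C) (hr : r ∉ C) :
    IsIDCode (rootedProduct H K r) (Set.univ ×ˢ C) := by
  simp only [IsIDCode, closedNbhd_rootedProduct_inter hr]
  refine ⟨fun x => (Set.singleton_nonempty x.1).prod (hC.1 x.2), fun x y hne h => hne ?_⟩
  rw [Set.prod_eq_prod_iff_of_nonempty ((Set.singleton_nonempty x.1).prod (hC.1 x.2))] at h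
  exact Prod.ext (Set.singleton_injective h.1) (hC.injective h.2)

theorem IsNearPacking.idNum_rootedProduct [Fintype W] [Fintype U] {c : U → U} {s C : Set U}
    (hs : IsNearPacking K c s) (hrs : r ∉ s) (hC : IsIDCode K C) (hrC : r ∉ C)
    (h : C.ncard = s.ncard) :
    idNum (rootedProduct H K r) = Fintype.card W * s.ncard := by
  rw [(hs.rootedProduct hrs).idNum_eq (hC.rootedProduct hrC) (by simp only [Set.ncard_prod, h]),
    Set.ncard_prod, Set.ncard_univ, Nat.card_eq_fintype_card]

theorem ncard_neighborSet_rootedProduct_root [Finite W] [Finite U] (w : W) :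
    ((rootedProduct H K r).neighborSet (w, r)).ncard =
      (H.neighborSet w).ncard + (K.neighborSet r).ncard := by
  have disjoint : Disjoint ({w} ×ˢ K.neighborSet r) (H.neighborSet w ×ˢ {r}) :=
    Set.disjoint_prod.2 (Or.inl (by simp))
  rw [neighborSet_rootedProduct_root, Set.ncard_union_eq disjoint, Set.ncard_prod, Set.ncard_prod,
    Set.ncard_singleton, Set.ncard_singleton, one_mul, mul_one, add_comm]

theorem ncard_neighborSet_rootedProduct_of_ne (w : W) {u : U} (hu : u ≠ r) :
    ((rootedProduct H K r).neighborSet (w, u)).ncard = (K.neighborSet u).ncard := by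
  rw [neighborSet_rootedProduct_of_ne w hu, Set.ncard_prod, Set.ncard_singleton, one_mul]

theorem maxDeg_rootedProduct [Fintype W] [Nonempty W] [Fintype U] :
    maxDeg (rootedProduct H K r) = max (maxDeg H + (K.neighborSet r).ncard) (maxDeg K) := by
  refine le_antisymm (maxDeg_le_iff.2 ?_) (max_le ?_ (maxDeg_le_iff.2 fun u => ?_))
  · rintro ⟨w, u⟩
    by_cases hu : u = r
    · rw [hu, ncard_neighborSet_rootedProduct_root]
      exact le_max_of_le_left (Nat.add_le_add_right (ncard_neighborSet_le_maxDeg w) _)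
    · rw [ncard_neighborSet_rootedProduct_of_ne w hu]
      exact le_max_of_le_right (ncard_neighborSet_le_maxDeg u)
  · obtain ⟨w, hw⟩ := exists_ncard_neighborSet_eq_maxDeg (G := H)
    rw [← hw, ← ncard_neighborSet_rootedProduct_root]
    exact ncard_neighborSet_le_maxDeg _
  · obtain ⟨w⟩ := ‹Nonempty W›
    refine le_trans ?_ (ncard_neighborSet_le_maxDeg (w, u))
    by_cases hu : u = r
    · rw [hu, ncard_neighborSet_rootedProduct_root]
      exact Nat.le_add_left _ _
    · rw [ncard_neighborSet_rootedProduct_of_ne w hu]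

theorem connected_rootedProduct (hH : H.Connected) (hK : K.Connected) :
    (rootedProduct H K r).Connected := by
  have reachable_fiber (w : W) (u u' : U) :
      (rootedProduct H K r).Reachable (w, u) (w, u') :=
    (hK.preconnected u u').map ⟨Prod.mk w, fun h => Or.inl ⟨rfl, h⟩⟩
  have reachable_root (w w' : W) : (rootedProduct H K r).Reachable (w, r) (w', r) :=
    (hH.preconnected w w').map ⟨(·, r), fun h => Or.inr ⟨rfl, rfl, h⟩⟩
  obtain ⟨w⟩ := hH.nonempty
  exact (connected_iff_exists_forall_reachable _).2
    ⟨(w, r), fun x => (reachable_root w x.1).trans (reachable_fiber x.1 r x.2)⟩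

theorem ncard_edgeSet_rootedProduct_le [Finite W] [Finite U] :
    (rootedProduct H K r).edgeSet.ncard ≤
      H.edgeSet.ncard + Nat.card W * K.edgeSet.ncard := by
  have edgeSet_subset : (rootedProduct H K r).edgeSet ⊆ Sym2.map (·, r) '' H.edgeSet ∪
      (fun p : W × Sym2 U => p.2.map (Prod.mk p.1)) '' (Set.univ ×ˢ K.edgeSet) := by
    rintro ⟨⟨w, u⟩, ⟨w', u'⟩⟩ (⟨hw : w = w', h⟩ | ⟨hu : u = r, hu' : u' = r, h⟩)
    · subst hw
      exact Or.inr ⟨(w, s(u, u')), ⟨trivial, h⟩, rfl⟩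
    · subst hu hu'
      exact Or.inl ⟨s(w, w'), h, rfl⟩
  calc _ ≤ _ := Set.ncard_le_ncard edgeSet_subset
    _ ≤ _ := Set.ncard_union_le _ _
    _ ≤ H.edgeSet.ncard + (Set.univ ×ˢ K.edgeSet : Set (W × Sym2 U)).ncard :=
      Nat.add_le_add Set.ncard_image_le Set.ncard_image_le
    _ = H.edgeSet.ncard + Nat.card W * K.edgeSet.ncard := by rw [Set.ncard_prod, Set.ncard_univ]

theorem isTree_rootedProduct [Finite W] [Finite U] (hH : H.IsTree) (hK : K.IsTree) :
    (rootedProduct H K r).IsTree := by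
  refine isTree_of_ncard_edgeSet_lt (connected_rootedProduct hH.connected hK.connected) ?_
  have cardH : H.edgeSet.ncard + 1 = Nat.card W := (isTree_iff_connected_and_card.1 hH).2
  have cardK : K.edgeSet.ncard + 1 = Nat.card U := (isTree_iff_connected_and_card.1 hK).2
  have hle := ncard_edgeSet_rootedProduct_le (H := H) (K := K) (r := r)
  rw [Nat.card_prod, ← cardK, mul_add_one]
  omega

end RootedProduct

/-- The vertices of the tree `T_{1,Δ}`, where `κ` has `Δ - 3` and `ι` has `Δ - 1` elements: the
single path vertex `root`, the subdivision vertex `mid`, and the centers and leaves of the appended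
stars. The star `none` is the one behind `mid`. The leaf by which a star is appended is not a `leaf`
here. -/
inductive StarCluster (κ ι : Type*) : Type _
  | root
  | mid
  | center (j : Option κ)
  | leaf (j : Option κ) (l : ι)

namespace StarCluster

variable {κ ι : Type*}

def equivSum : StarCluster κ ι ≃ Bool ⊕ Option κ × Option ι where
  toFun
    | root => Sum.inl false
    | mid => Sum.inl true
    | center j => Sum.inr (j, none)
    | leaf j l => Sum.inr (j, some l)
  invFun
    | Sum.inl false => root
    | Sum.inl true => mid
    | Sum.inr (j, none) => center j
    | Sum.inr (j, some l) => leaf j l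
  left_inv v := by cases v <;> rfl
  right_inv := by rintro ((_ | _) | ⟨j, _ | l⟩) <;> rfl

instance [Fintype κ] [Fintype ι] : Fintype (StarCluster κ ι) := Fintype.ofEquiv _ equivSum.symm

theorem card_eq [Fintype κ] [Fintype ι] :
    Fintype.card (StarCluster κ ι) = 2 + (Fintype.card κ + 1) * (Fintype.card ι + 1) := by
  simp [Fintype.card_congr equivSum]

/-- The parent of a vertex, for `T_{1,Δ}` rooted at its path vertex. -/
def parent : StarCluster κ ι → StarCluster κ ι
  | root => root
  | mid => root
  | center none => mid
  | center (some _) => root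
  | leaf j _ => center j

/-- An upper bound for the distance to the root, decreasing along `parent`. -/
def height : StarCluster κ ι → ℕ
  | root => 0
  | mid => 1
  | center _ => 2
  | leaf _ _ => 3

end StarCluster

/-- The tree `T_{1,Δ}`, see `StarCluster`. -/
def starClusterGraph (κ ι : Type*) : SimpleGraph (StarCluster κ ι) :=
  SimpleGraph.fromRel fun v w => v.parent = w

namespace StarCluster

variable {κ ι : Type*}

theorem isTree [Finite κ] [Finite ι] : (starClusterGraph κ ι).IsTree := by
  have : Finite (StarCluster κ ι) := Finite.of_equiv _ equivSum.symm
  refine isTree_fromRel_parent (r := root) rfl height ?_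
  rintro (_ | _ | (_ | _) | _) h
  · exact absurd rfl h
  all_goals simp [parent, height]

theorem neighborSet_root :
    (starClusterGraph κ ι).neighborSet root = insert mid (Set.range (center ∘ some)) := by
  ext (_ | _ | (_ | _) | _) <;> simp [starClusterGraph, parent]

theorem neighborSet_mid : (starClusterGraph κ ι).neighborSet mid = {root, center none} := by
  ext (_ | _ | (_ | _) | _) <;> simp [starClusterGraph, parent]

theorem neighborSet_center (j : Option κ) :
    (starClusterGraph κ ι).neighborSet (center j) =
      insert (center j).parent (Set.range (leaf j)) := by
  cases j <;> ext (_ | _ | (_ | _) | _) <;> simp [starClusterGraph, parent, eq_comm]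

theorem neighborSet_leaf (j : Option κ) (l : ι) :
    (starClusterGraph κ ι).neighborSet (leaf j l) = {center j} := by
  ext (_ | _ | (_ | _) | _) <;> simp [starClusterGraph, parent, eq_comm]

theorem closedNbhd_mid : closedNbhd (starClusterGraph κ ι) mid = {mid, root, center none} := by
  rw [closedNbhd, neighborSet_mid]

theorem closedNbhd_center_none : closedNbhd (starClusterGraph κ ι) (center none) =
    insert (center none) (insert mid (Set.range (leaf none))) := by
  rw [closedNbhd, neighborSet_center, parent]

theorem closedNbhd_leaf (j : Option κ) (l : ι) :
    closedNbhd (starClusterGraph κ ι) (leaf j l) = {leaf j l, center j} := by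
  rw [closedNbhd, neighborSet_leaf]

theorem leaf_injective : Function.Injective fun p : Option κ × ι => leaf p.1 p.2 :=
  fun _ _ h => Prod.ext (leaf.inj h).1 (leaf.inj h).2

theorem ncard_neighborSet_root [Fintype κ] :
    ((starClusterGraph κ ι).neighborSet root).ncard = Fintype.card κ + 1 := by
  have center_some_injective : Function.Injective (center ∘ some : κ → StarCluster κ ι) :=
    fun _ _ h => Option.some.inj (center.inj h)
  rw [neighborSet_root, Set.ncard_insert_of_notMem (by simp) (Set.finite_range _),
    Set.ncard_range_of_injective center_some_injective, Nat.card_eq_fintype_card]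

theorem ncard_neighborSet_center [Fintype ι] (j : Option κ) :
    ((starClusterGraph κ ι).neighborSet (center j)).ncard = Fintype.card ι + 1 := by
  have parent_notMem : (center j).parent ∉ Set.range (leaf j : ι → StarCluster κ ι) := by
    cases j <;> simp [parent]
  rw [neighborSet_center, Set.ncard_insert_of_notMem parent_notMem (Set.finite_range _),
    Set.ncard_range_of_injective fun _ _ h => (leaf.inj h).2, Nat.card_eq_fintype_card]

theorem maxDeg_eq [Fintype κ] [Fintype ι] [Nonempty ι] (h : Fintype.card κ ≤ Fintype.card ι) :
    maxDeg (starClusterGraph κ ι) = Fintype.card ι + 1 := by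
  have card_pos : 0 < Fintype.card ι := Fintype.card_pos
  refine le_antisymm (maxDeg_le_iff.2 ?_) ?_
  · rintro (_ | _ | j | ⟨j, l⟩)
    · rw [ncard_neighborSet_root]
      omega
    · rw [neighborSet_mid]
      exact (Set.ncard_insert_le _ _).trans (by rw [Set.ncard_singleton]; omega)
    · exact (ncard_neighborSet_center j).le
    · rw [neighborSet_leaf, Set.ncard_singleton]
      omega
  · rw [← ncard_neighborSet_center (ι := ι) (none : Option κ)]
    exact ncard_neighborSet_le_maxDeg _

variable (κ ι) in
/-- The near-packing of `T_{1,Δ}` giving the lower bound for identifying codes. -/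
def packing : Set (StarCluster κ ι) := insert mid (Set.range fun p : Option κ × ι => leaf p.1 p.2)

/-- The vertex in which the closed neighborhood of an element of `packing` may meet the others. -/
def contact : StarCluster κ ι → StarCluster κ ι
  | leaf j _ => center j
  | _ => center none

theorem ncard_packing [Fintype κ] [Fintype ι] :
    (packing κ ι).ncard = (Fintype.card κ + 1) * Fintype.card ι + 1 := by
  rw [packing, Set.ncard_insert_of_notMem (by simp) (Set.finite_range _),
    Set.ncard_range_of_injective leaf_injective]
  simp

theorem isNearPacking : IsNearPacking (starClusterGraph κ ι) contact (packing κ ι) := by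
  rintro _ (rfl | ⟨⟨j, l⟩, rfl⟩) _ (rfl | ⟨⟨j', l'⟩, rfl⟩) hne
  · exact absurd rfl hne
  all_goals
    rintro z ⟨hz, hz'⟩
    simp only [closedNbhd_mid, closedNbhd_leaf, Set.mem_insert_iff,
      Set.mem_singleton_iff, contact] at hz hz' ⊢
    grind

/-- The optimal identifying code of `T_{1,Δ}`; the star `none` has a center in place of the leaf
`l₀`. -/
def code (l₀ : ι) : Set (StarCluster κ ι) := insert (center none) (packing κ ι \ {leaf none l₀})

theorem ncard_code (l₀ : ι) : (code l₀ : Set (StarCluster κ ι)).ncard = (packing κ ι).ncard :=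
  Set.ncard_exchange (by simp [packing]) (by simp [packing])

theorem mid_mem_code (l₀ : ι) : (mid : StarCluster κ ι) ∈ code l₀ := by
  simp [code, packing]

theorem center_none_mem_code (l₀ : ι) : (center none : StarCluster κ ι) ∈ code l₀ :=
  Set.mem_insert _ _

theorem leaf_mem_code_iff {l₀ l : ι} {j : Option κ} :
    leaf j l ∈ code l₀ ↔ (j = none → l ≠ l₀) := by
  simp [code, packing]

theorem exists_mem_code_mem_closedNbhd (l₀ : ι) (v : StarCluster κ ι) :
    ∃ z ∈ code l₀, v ∈ closedNbhd (starClusterGraph κ ι) z := by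
  obtain _ | _ | (_ | j) | ⟨_ | j, l⟩ := v
  · exact ⟨mid, mid_mem_code l₀, by simp [closedNbhd_mid]⟩
  · exact ⟨mid, mid_mem_code l₀, by simp [closedNbhd_mid]⟩
  · exact ⟨mid, mid_mem_code l₀, by simp [closedNbhd_mid]⟩
  · exact ⟨leaf (some j) l₀, leaf_mem_code_iff.2 (by simp), by simp [closedNbhd_leaf]⟩
  · exact ⟨center none, center_none_mem_code l₀, by simp [closedNbhd_center_none]⟩
  · exact ⟨leaf (some j) l, leaf_mem_code_iff.2 (by simp), by simp [closedNbhd_leaf]⟩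

theorem eq_of_forall_mem_code [Nontrivial ι] (l₀ : ι) {u v : StarCluster κ ι}
    (h : ∀ z ∈ code l₀,
      u ∈ closedNbhd (starClusterGraph κ ι) z ↔ v ∈ closedNbhd (starClusterGraph κ ι) z) :
    u = v := by
  obtain ⟨l₁, hl₁⟩ := exists_ne l₀
  have sees_mid := h mid (mid_mem_code l₀)
  have sees_center := h (center none) (center_none_mem_code l₀)
  have sees_leaf_none (l : ι) (hl : l ≠ l₀) := h (leaf none l) (leaf_mem_code_iff.2 fun _ => hl)
  have sees_leaf_some (j : κ) (l : ι) := h (leaf (some j) l) (leaf_mem_code_iff.2 (by simp))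
  have sees_leaf₁ := sees_leaf_none l₁ hl₁
  have sees_two_leaves (j : κ) := And.intro (sees_leaf_some j l₀) (sees_leaf_some j l₁)
  simp only [closedNbhd_mid, closedNbhd_center_none, closedNbhd_leaf, Set.mem_insert_iff,
      Set.mem_singleton_iff, Set.mem_range]
    at sees_mid sees_center sees_leaf_none sees_leaf_some sees_leaf₁ sees_two_leaves
  clear h
  -- `sees_mid` and `sees_center` leave four classes: the root; `mid` and `center none`; the leaves
  -- of the star `none`; all other centers and leaves. Leaves in the code separate each class.
  obtain _ | _ | (_ | _) | ⟨_ | _, _⟩ := u <;> obtain _ | _ | (_ | _) | ⟨_ | _, _⟩ := v <;> grind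

theorem isIDCode_code [Nontrivial ι] (l₀ : ι) : IsIDCode (starClusterGraph κ ι) (code l₀) :=
  isIDCode_iff.2 ⟨exists_mem_code_mem_closedNbhd l₀, fun _ _ => eq_of_forall_mem_code l₀⟩

end StarCluster

theorem idNum_rootedProduct_starClusterGraph {W κ ι : Type*} [Fintype W] [Fintype κ] [Fintype ι]
    [Nontrivial ι] (H : SimpleGraph W) :
    idNum (rootedProduct H (starClusterGraph κ ι) StarCluster.root) =
      Fintype.card W * ((Fintype.card κ + 1) * Fintype.card ι + 1) := by
  obtain ⟨l₀⟩ := Nontrivial.to_nonempty (α := ι)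
  rw [StarCluster.isNearPacking.idNum_rootedProduct (by simp [StarCluster.packing])
    (StarCluster.isIDCode_code l₀) (by simp [StarCluster.code, StarCluster.packing])
    (StarCluster.ncard_code l₀), StarCluster.ncard_packing]

/-- The tree `T_{t,Δ}` for `Δ = d + 3`. -/
def starTree (t d : ℕ) : SimpleGraph (Fin t × StarCluster (Fin d) (Fin (d + 2))) :=
  rootedProduct (pathGraph t) (starClusterGraph (Fin d) (Fin (d + 2))) StarCluster.root

theorem card_starTree (t d : ℕ) :
    Fintype.card (Fin t × StarCluster (Fin d) (Fin (d + 2))) =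
      t * ((d + 1) * (d + 3)) + 2 * t := by
  rw [Fintype.card_prod, StarCluster.card_eq]
  simp only [Fintype.card_fin]
  ring

theorem isTree_starTree (n d : ℕ) : (starTree (n + 1) d).IsTree :=
  isTree_rootedProduct (isTree_pathGraph n) StarCluster.isTree

theorem maxDeg_starTree (n d : ℕ) : maxDeg (starTree (n + 1) d) = d + 3 := by
  have maxDeg_path := maxDeg_pathGraph_le (n + 1)
  rw [starTree, maxDeg_rootedProduct, StarCluster.ncard_neighborSet_root,
    StarCluster.maxDeg_eq (by simp)]
  simp only [Fintype.card_fin]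
  omega

theorem idNum_starTree (t d : ℕ) : idNum (starTree t d) = t * ((d + 1) * (d + 2) + 1) := by
  rw [starTree, idNum_rootedProduct_starClusterGraph]
  simp only [Fintype.card_fin]

theorem density_bound_lt {Δ t : ℕ} (hΔ : 2 ≤ Δ) (ht : 0 < t) :
    ((Δ : ℝ) - 1) / Δ * ((t * ((Δ - 2) * Δ) + 2 * t : ℕ) : ℝ) -
        ((t * ((Δ - 2) * Δ) + 2 * t : ℕ) : ℝ) / (Δ : ℝ) ^ 2 <
      ((t * ((Δ - 2) * (Δ - 1) + 1) : ℕ) : ℝ) := by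
  have : (0 : ℝ) < Δ := by positivity
  have : (0 : ℝ) < t := by positivity
  push_cast [Nat.cast_sub hΔ, Nat.cast_sub (one_le_two.trans hΔ)]
  rw [← sub_pos]
  calc (0 : ℝ) < 2 * t / Δ ^ 2 := by positivity
    _ = t * ((Δ - 2) * (Δ - 1) + 1) - ((Δ - 1) / Δ * (t * ((Δ - 2) * Δ) + 2 * t) -
          (t * ((Δ - 2) * Δ) + 2 * t) / Δ ^ 2) := by
      field_simp
      ring

theorem stmt_16_general (Δ t : ℕ) (hΔ : 3 ≤ Δ) (ht : 1 ≤ t) :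
    ∃ G : SimpleGraph (Fin (t * ((Δ - 2) * Δ) + 2 * t)),
      G.IsTree ∧ maxDeg G = Δ ∧
      idNum G = t * ((Δ - 2) * (Δ - 1) + 1) ∧
      (idNum G : ℝ) >
        ((Δ : ℝ) - 1) / Δ * ((t * ((Δ - 2) * Δ) + 2 * t : ℕ) : ℝ) -
          ((t * ((Δ - 2) * Δ) + 2 * t : ℕ) : ℝ) / (Δ : ℝ) ^ 2 := by
  have density_lt := density_bound_lt (by omega : 2 ≤ Δ) ht
  obtain ⟨d, rfl⟩ := Nat.exists_eq_add_of_le' hΔ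
  obtain ⟨n, rfl⟩ := Nat.exists_eq_add_of_le' ht
  let e := Iso.map (Fintype.equivFinOfCardEq (card_starTree (n + 1) d)) (starTree (n + 1) d)
  have idNum_eq := (idNum_congr e).symm.trans (idNum_starTree (n + 1) d)
  exact ⟨_, e.isTree_iff.1 (isTree_starTree n d),
    (maxDeg_congr e).symm.trans (maxDeg_starTree n d), idNum_eq, idNum_eq ▸ density_lt⟩

/-- for all `Δ ≥ 4` and `t ≥ 3` there is a tree `G` of order
`n = t(Δ−2)Δ + 2t` with maximum degree `Δ` and
`γ^ID(G) = t((Δ−2)(Δ−1) + 1) > ((Δ−1)/Δ)·n − n/Δ²`. -/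
theorem stmt_16 (Δ t : ℕ) (hΔ : 4 ≤ Δ) (ht : 3 ≤ t) :
    ∃ G : SimpleGraph (Fin (t * ((Δ - 2) * Δ) + 2 * t)),
      G.IsTree ∧ maxDeg G = Δ ∧
      idNum G = t * ((Δ - 2) * (Δ - 1) + 1) ∧
      (idNum G : ℝ) >
        ((Δ : ℝ) - 1) / Δ * ((t * ((Δ - 2) * Δ) + 2 * t : ℕ) : ℝ) -
          ((t * ((Δ - 2) * Δ) + 2 * t : ℕ) : ℝ) / (Δ : ℝ) ^ 2 :=
  stmt_16_general Δ t (by omega) (by omega)
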